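/- arXiv:1403.4655 — 4 statements merged into one kernel-verified Lean document; each statement's English description precedes it below -/
import Mathlib

section
/- Let r ≥ 1 and let λ_0, λ_1, …, λ_r ∈ ℂ be pairwise distinct. Set ω(s) = ∏_{k=1}^r (s − λ_k) and w_j = 1 / ∏_{k≠j, k≥1} (λ_j − λ_k). Let n, d ∈ ℂ[X] with deg n ≤ r − 1 and deg d = r, and define α = d(λ_0)/ω(λ_0) − Σ_{j=1}^r w_j d(λ_j)/(λ_0 − λ_j), so α ≠ 0. Define φ_j = w_j n(λ_j)/α and ψ_j = w_j d(λ_j)/α for j = 1, …, r. Then for every s ∈ ℂ with s ∉ {λ_1, …, λ_r} and d(s) ≠ 0, one has n(s)/d(s) = (Σ_{j=1}^r φ_j/(s − λ_j)) / (1 + Σ_{j=1}^r ψ_j/(s − λ_j)); that is, the rational function n/d admits the barycentric representation with nodes λ_1, …, λ_r and coefficients φ_j, ψ_j. -/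
/-!
The constant `α` does not depend on `l0`: it is the leading coefficient of `d`. Indeed
`d - C d.leadingCoeff * ω` has degree below `r` and agrees with `d` at the nodes, so Lagrange
interpolation (`eval_div_nodal_eq_sum`) gives `d(s)/ω(s) - Σ_j w_j d(l j)/(s - l j) = lead d` at
every non-node `s` (`eval_div_nodal_sub_sum`). Taking `s = l0` identifies `α`, which is therefore
nonzero. At a general `s`, the denominator of the barycentric form is `d(s)/(α ω(s))`, its
numerator is `n(s)/(α ω(s))` by interpolation of `n`, and the quotient is `n(s)/d(s)`.
-/

open Polynomial Finset

/-- Lagrange interpolation in first barycentric form, for polynomials of degree less than the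
number of nodes. -/
lemma eval_div_nodal_eq_sum {r : ℕ} {l : Fin r → ℂ} (hinj : Function.Injective l)
    {p : Polynomial ℂ} (hp : p.degree < (r : ℕ)) {s : ℂ} (hs : ∀ j, s ≠ l j) :
    p.eval s / ∏ k, (s - l k) =
      ∑ j, (1 / ∏ k ∈ Finset.univ.erase j, (l j - l k)) * p.eval (l j) / (s - l j) := by
  have hω : ∏ k, (s - l k) ≠ 0 := Finset.prod_ne_zero_iff.2 fun k _ => sub_ne_zero.2 (hs k)
  have h := Lagrange.eq_interpolate (s := Finset.univ) (v := l) (f := p)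
    hinj.injOn (by simpa using hp)
  have h2 := Lagrange.eval_interpolate_not_at_node (s := Finset.univ) (v := l)
    (r := fun i => p.eval (l i)) (x := s) (fun i _ => hs i)
  rw [← h, Lagrange.eval_nodal] at h2
  rw [h2, mul_div_cancel_left₀ _ hω]
  refine Finset.sum_congr rfl fun j _ => ?_
  rw [Lagrange.nodalWeight, Finset.prod_inv_distrib]
  ring

/-- The expression defining `α`, evaluated at any non-node, is the leading coefficient of `d`. -/
lemma eval_div_nodal_sub_sum {r : ℕ} {l : Fin r → ℂ} (hinj : Function.Injective l)
    {d : Polynomial ℂ} (hd : d.degree = (r : ℕ)) {s : ℂ} (hs : ∀ j, s ≠ l j) :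
    d.eval s / ∏ k, (s - l k)
      - ∑ j, (1 / ∏ k ∈ Finset.univ.erase j, (l j - l k)) * d.eval (l j) / (s - l j)
      = d.leadingCoeff := by
  have hω : ∏ k, (s - l k) ≠ 0 := Finset.prod_ne_zero_iff.2 fun k _ => sub_ne_zero.2 (hs k)
  have hd0 : d ≠ 0 := by
    rintro rfl
    simp at hd
  have hlc : d.leadingCoeff ≠ 0 := leadingCoeff_ne_zero.2 hd0
  have hdeg : (d - C d.leadingCoeff * Lagrange.nodal Finset.univ l).degree < (r : ℕ) := by
    rw [← hd]
    refine degree_sub_lt_left ?_ hd0 ?_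
    · rw [degree_C_mul hlc, Lagrange.degree_nodal, hd, Finset.card_univ, Fintype.card_fin]
    · rw [leadingCoeff_mul, leadingCoeff_C, Lagrange.nodal_monic.leadingCoeff, mul_one]
  have h := eval_div_nodal_eq_sum hinj hdeg hs
  simp only [eval_sub, eval_mul, eval_C, Lagrange.eval_nodal_at_node (Finset.mem_univ _),
    mul_zero, sub_zero] at h
  rw [← h, Lagrange.eval_nodal]
  field_simp
  ring

/-- Barycentric representation of a proper rational function: with pairwise distinct
nodes `l0, l 1, …, l r`, `deg n ≤ r - 1`, `deg d = r`,
`α = d(l0)/ω(l0) - Σ_j w_j d(l j)/(l0 - l j)` (which is nonzero), and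
`φ j = w_j n(l j)/α`, `ψ j = w_j d(l j)/α`, one has
`n(s)/d(s) = (Σ_j φ j/(s - l j)) / (1 + Σ_j ψ j/(s - l j))` away from nodes and zeros of `d`. -/
theorem barycentric_representation (r : ℕ) (hr : 1 ≤ r) (l0 : ℂ) (l : Fin r → ℂ)
    (hinj : Function.Injective l) (h0 : ∀ j, l0 ≠ l j)
    (n d : Polynomial ℂ) (hn : n.degree ≤ (r - 1 : ℕ)) (hd : d.degree = (r : ℕ)) :
    (d.eval l0 / ∏ k, (l0 - l k)
        - ∑ j, (1 / ∏ k ∈ Finset.univ.erase j, (l j - l k)) * d.eval (l j) / (l0 - l j)) ≠ 0 ∧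
    ∀ s : ℂ, (∀ j, s ≠ l j) → d.eval s ≠ 0 →
      n.eval s / d.eval s =
        (∑ j, ((1 / ∏ k ∈ Finset.univ.erase j, (l j - l k)) * n.eval (l j) /
            (d.eval l0 / ∏ k, (l0 - l k)
              - ∑ i, (1 / ∏ k ∈ Finset.univ.erase i, (l i - l k)) * d.eval (l i) / (l0 - l i)))
          / (s - l j)) /
        (1 + ∑ j, ((1 / ∏ k ∈ Finset.univ.erase j, (l j - l k)) * d.eval (l j) /
            (d.eval l0 / ∏ k, (l0 - l k)
              - ∑ i, (1 / ∏ k ∈ Finset.univ.erase i, (l i - l k)) * d.eval (l i) / (l0 - l i)))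
          / (s - l j)) := by
  have hα := eval_div_nodal_sub_sum hinj hd h0
  have hd0 : d ≠ 0 := by
    rintro rfl
    simp at hd
  have hlc : d.leadingCoeff ≠ 0 := leadingCoeff_ne_zero.2 hd0
  rw [hα]
  refine ⟨hlc, fun s hs hds => ?_⟩
  have hω : ∏ k, (s - l k) ≠ 0 := Finset.prod_ne_zero_iff.2 fun k _ => sub_ne_zero.2 (hs k)
  have hN := eval_div_nodal_eq_sum hinj
    (hn.trans_lt (by exact_mod_cast Nat.sub_lt hr one_pos)) hs
  have hD := eval_div_nodal_sub_sum hinj hd hs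
  simp only [div_right_comm _ d.leadingCoeff, ← Finset.sum_div]
  rw [← hN, ← sub_eq_of_eq_add' (eq_add_of_sub_eq hD)]
  have hden : 1 + (d.eval s / ∏ k, (s - l k) - d.leadingCoeff) / d.leadingCoeff
      = d.eval s / (∏ k, (s - l k)) / d.leadingCoeff := by
    field_simp
    ring
  rw [hden]
  field_simp
end

section
/- Let r ≥ 1, let λ_1, …, λ_r ∈ ℂ be pairwise distinct, and let φ, ψ ∈ ℂ^r. Define ñ(s) = Σ_{j=1}^r φ_j/(s − λ_j) and d̃(s) = 1 + Σ_{j=1}^r ψ_j/(s − λ_j). Suppose μ_1, …, μ_r ∈ ℂ are pairwise distinct, each μ_m ∉ {λ_1, …, λ_r}, and d̃(μ_m) = 0 for every m. Then for every s ∈ ℂ with s ∉ {λ_1, …, λ_r} ∪ {μ_1, …, μ_r}, one has d̃(s) ≠ 0 and ñ(s)/d̃(s) = Σ_{j=1}^r c_j/(s − μ_j), where c_j = ñ(μ_j) · ∏_{ℓ=1}^r (μ_j − λ_ℓ) / ∏_{ℓ≠j} (μ_j − μ_ℓ). In particular, in the barycentric representation of ñ/d̃ based on the relocated nodes μ_1,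 …, μ_r, the denominator is identically 1. -/
open Finset

/-!
Multiply numerator and denominator by the nodal polynomial `L = ∏ (X - l j)`.
The numerator becomes a polynomial `N` of degree less than `r`. The denominator becomes
a monic polynomial of degree `r` that vanishes at the `r` distinct points `μ m`, so it equals
`M = ∏ (X - μ m)` (`nodal_add_clearedSum`). Hence `ñ/d̃ = N/M`, and Lagrange interpolation of `N`
at the nodes `μ` is its partial fraction expansion, with coefficients
`N (μ j) / ∏_{t ≠ j} (μ j - μ t)` and `N (μ j) = ñ (μ j) * L (μ j)`.
-/

open Polynomial Lagrange

/-- The polynomial `∑ j, a j * ∏_{t ≠ j} (X - l t)`, obtained from `∑ j, a j / (s - l j)` by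
clearing denominators. -/
noncomputable def clearedSum {r : ℕ} (l a : Fin r → ℂ) : ℂ[X] :=
  ∑ j, C (a j) * nodal (univ.erase j) l

lemma degree_clearedSum_lt {r : ℕ} (l a : Fin r → ℂ) : (clearedSum l a).degree < r := by
  refine (degree_sum_le _ _).trans_lt ((Finset.sup_lt_iff (WithBot.bot_lt_coe r)).2 ?_)
  intro j _
  rw [← smul_eq_C_mul]
  refine (degree_smul_le _ _).trans_lt ?_
  rw [degree_nodal]
  have h := card_erase_lt_of_mem (mem_univ j)
  rw [card_univ, Fintype.card_fin] at h
  exact Nat.cast_lt.2 h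

lemma eval_clearedSum {r : ℕ} (l a : Fin r → ℂ) {x : ℂ} (hx : ∀ j, x ≠ l j) :
    (clearedSum l a).eval x = (∑ j, a j / (x - l j)) * ∏ t, (x - l t) := by
  rw [clearedSum, eval_finsetSum, sum_mul]
  refine sum_congr rfl fun j _ => ?_
  have h := sub_ne_zero.2 (hx j)
  rw [eval_mul, eval_C, eval_nodal, ← mul_prod_erase univ (fun t => x - l t) (mem_univ j)]
  field_simp

/-- The cleared denominator is the nodal polynomial of the relocated nodes: both are monic of
degree `r`, so their difference has degree less than `r`, and it vanishes at the `r` points `μ m`. -/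
lemma nodal_add_clearedSum {r : ℕ} {l μ ψ : Fin r → ℂ}
    (hμ : Function.Injective μ) (hlμ : ∀ m j, μ m ≠ l j)
    (hzero : ∀ m, 1 + ∑ j, ψ j / (μ m - l j) = 0) :
    nodal univ l + clearedSum l ψ = nodal univ μ := by
  refine eq_of_degree_sub_lt_of_eval_index_eq univ (v := μ) hμ.injOn ?_ ?_
  · have hd : (nodal univ l - nodal univ μ).degree < r := by
      have h := degree_sub_lt_left (p := nodal univ l) (q := nodal univ μ)
        (by rw [degree_nodal, degree_nodal]) nodal_ne_zero
        (by rw [nodal_monic.leadingCoeff, nodal_monic.leadingCoeff])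
      rwa [degree_nodal, card_univ, Fintype.card_fin] at h
    rw [card_univ, Fintype.card_fin, add_sub_right_comm]
    exact (degree_add_le _ _).trans_lt (max_lt hd (degree_clearedSum_lt l ψ))
  · intro m _
    rw [eval_add, eval_clearedSum l ψ (hlμ m), eval_nodal, eval_nodal_at_node (mem_univ m),
      ← one_add_mul, hzero m, zero_mul]

/-- Pole relocation in Vector Fitting: if `μ 1, …, μ r` are the zeros of the barycentric
denominator `d̃(s) = 1 + Σ_j ψ j/(s - l j)`, then away from all nodes `d̃(s) ≠ 0` and
`ñ(s)/d̃(s) = Σ_j c j/(s - μ j)` with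
`c j = ñ(μ j) * ∏_t (μ j - l t) / ∏_{t ≠ j} (μ j - μ t)`; in the relocated barycentric
representation the denominator is identically 1. -/
theorem vf_pole_relocation (r : ℕ) (hr : 1 ≤ r) (l μ : Fin r → ℂ) (φ ψ : Fin r → ℂ)
    (hl : Function.Injective l) (hμ : Function.Injective μ)
    (hlμ : ∀ m j, μ m ≠ l j)
    (hzero : ∀ m, 1 + ∑ j, ψ j / (μ m - l j) = 0) :
    ∀ s : ℂ, (∀ j, s ≠ l j) → (∀ m, s ≠ μ m) →
      (1 + ∑ j, ψ j / (s - l j)) ≠ 0 ∧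
      (∑ j, φ j / (s - l j)) / (1 + ∑ j, ψ j / (s - l j)) =
        ∑ j, ((∑ i, φ i / (μ j - l i)) * (∏ t, (μ j - l t)) /
            ∏ t ∈ Finset.univ.erase j, (μ j - μ t)) / (s - μ j) := by
  intro s hsl hsμ
  have hL : ∏ t, (s - l t) ≠ 0 := prod_ne_zero_iff.2 fun t _ => sub_ne_zero.2 (hsl t)
  have hM : ∏ t, (s - μ t) ≠ 0 := prod_ne_zero_iff.2 fun t _ => sub_ne_zero.2 (hsμ t)
  have hden : (1 + ∑ j, ψ j / (s - l j)) * ∏ t, (s - l t) = ∏ t, (s - μ t) := by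
    have h := congrArg (eval s) (nodal_add_clearedSum hμ hlμ hzero)
    rwa [eval_add, eval_clearedSum l ψ hsl, eval_nodal, eval_nodal, ← one_add_mul] at h
  have hd : (1 + ∑ j, ψ j / (s - l j)) ≠ 0 := fun h => hM (by rw [← hden, h, zero_mul])
  refine ⟨hd, ?_⟩
  have hN := congrArg (eval s) (eq_interpolate (s := univ) (v := μ) (f := clearedSum l φ)
    hμ.injOn (by simpa using degree_clearedSum_lt l φ))
  rw [eval_interpolate_not_at_node _ fun i _ => hsμ i, eval_clearedSum l φ hsl, eval_nodal] at hN
  rw [← mul_div_mul_right _ _ hL, hden, hN, mul_div_cancel_left₀ _ hM]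
  refine sum_congr rfl fun j _ => ?_
  rw [eval_clearedSum l φ (hlμ j), nodalWeight, prod_inv_distrib]
  ring
end

section
/- Let r ≥ 1 and let λ_1, …, λ_r, μ_1, …, μ_r ∈ ℂ be 2r pairwise distinct points. Let ψ ∈ ℂ^r and define d̃(s) = 1 + Σ_{j=1}^r ψ_j/(s − λ_j); assume d̃(μ_m) = 0 for every m = 1, …, r. Then for every pair of coefficient vectors a, b ∈ ℂ^r there exist ã, b̃ ∈ ℂ^r such that for every ξ ∈ ℂ with ξ ∉ {λ_1, …, λ_r} ∪ {μ_1, …, μ_r} and every h ∈ ℂ, one has d̃(ξ) ≠ 0 and (1/d̃(ξ)) · ( Σ_{j=1}^r a_j/(ξ − λ_j) − h·(1 + Σ_{j=1}^r b_j/(ξ − λ_j)) ) = Σ_{j=1}^r ã_j/(ξ − μ_j) − h·(1 + Σ_{j=1}^r b̃_j/(ξ − μ_j)). -/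
/-!
Write `N_v = ∏ j, (X - v j)`. Clearing denominators, `N_l · Σ_j c j/(s - l j)` is a polynomial
of degree less than `r` (`exists_poly_of_poleSum`), and conversely every polynomial of degree
less than `r` is, after division by `N_μ`, a sum of simple fractions at the distinct nodes `μ j`
(`exists_poleSum_of_poly`, by Lagrange interpolation).

Hence `N_l · d̃` is a monic polynomial of degree `r` with the `r` distinct zeros `μ m`, so it
equals `N_μ` (`nodal_add_eq_nodal`) and `1/d̃ = N_l/N_μ`. Multiplying by this factor turns
`Σ a j/(s - l j)` into a polynomial of degree less than `r` over `N_μ`, and `1 + Σ b j/(s - l j)`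
into a monic polynomial of degree `r` over `N_μ`, that is, `1` plus a polynomial of degree less
than `r` over `N_μ`.
-/

open Finset Polynomial Lagrange

theorem exists_poly_of_poleSum {r : ℕ} (l c : Fin r → ℂ) :
    ∃ P : ℂ[X], P.degree < r ∧ ∀ x : ℂ, (∀ j, x ≠ l j) →
      P.eval x = (nodal univ l).eval x * ∑ j, c j / (x - l j) := by
  refine ⟨∑ j, C (c j) * nodal (univ.erase j) l, ?_, ?_⟩
  · rw [← mem_degreeLT]
    refine Submodule.sum_mem _ fun j _ => ?_
    rw [← smul_eq_C_mul]
    refine Submodule.smul_mem _ _ ?_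
    rw [mem_degreeLT, degree_nodal, Nat.cast_lt]
    simpa using card_erase_lt_of_mem (mem_univ j)
  · intro x hx
    rw [eval_finsetSum, mul_sum]
    refine sum_congr rfl fun j _ => ?_
    have hj : x - l j ≠ 0 := sub_ne_zero.2 (hx j)
    rw [nodal_eq_mul_nodal_erase (mem_univ j)]
    simp only [eval_mul, eval_C, eval_sub, eval_X]
    field_simp

theorem exists_poleSum_of_poly {r : ℕ} {μ : Fin r → ℂ} (hμ : Function.Injective μ)
    {P : ℂ[X]} (hP : P.degree < r) :
    ∃ t : Fin r → ℂ, ∀ x : ℂ, (∀ j, x ≠ μ j) →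
      P.eval x = (nodal univ μ).eval x * ∑ j, t j / (x - μ j) := by
  refine ⟨fun j => nodalWeight univ μ j * P.eval (μ j), fun x hx => ?_⟩
  have h := eq_interpolate (s := univ) hμ.injOn (by simpa using hP)
  conv_lhs => rw [h]
  rw [eval_interpolate_not_at_node _ fun i _ => hx i]
  congr 1
  refine sum_congr rfl fun j _ => ?_
  rw [div_eq_mul_inv]
  ring

/-- A monic polynomial of degree `r`, given as `nodal univ l + Q` with `Q` of lower degree, which
vanishes at the `r` distinct points `μ m` is the nodal polynomial of `μ`. -/
theorem nodal_add_eq_nodal {r : ℕ} {l μ : Fin r → ℂ} (hμ : Function.Injective μ)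
    {Q : ℂ[X]} (hQ : Q.degree < r)
    (hz : ∀ m, (nodal univ l + Q).eval (μ m) = 0) :
    nodal univ l + Q = nodal univ μ := by
  refine eq_of_degree_sub_lt_of_eval_index_eq (v := μ) univ hμ.injOn ?_ fun m _ => ?_
  · have h : (nodal univ l - nodal univ μ).degree < (r : WithBot ℕ) := by
      have := degree_sub_lt_left (p := nodal univ l) (q := nodal univ μ)
        (by simp [degree_nodal]) nodal_ne_zero
        (by rw [nodal_monic.leadingCoeff, nodal_monic.leadingCoeff])
      simpa [degree_nodal] using this
    rw [card_univ, Fintype.card_fin, add_sub_right_comm]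
    exact (degree_add_le _ _).trans_lt (max_lt h hQ)
  · rw [hz, eval_nodal_at_node (mem_univ m)]

/-- The pointwise identity underlying one step of Vector Fitting: if the relocated nodes
`μ 1, …, μ r` are the zeros of `d̃(s) = 1 + Σ_j ψ j/(s - l j)` and the `2r` points
`l 1, …, l r, μ 1, …, μ r` are pairwise distinct, then for any coefficients `a, b` there
exist coefficients `ta, tb` such that for every sample point `ξ` (away from all nodes)
and every measurement value `h`, the `1/d̃(ξ)`-scaled residual in the old barycentric
basis equals the unscaled residual in the relocated basis. -/
theorem vf_rescaled_residual (r : ℕ) (hr : 1 ≤ r) (l μ : Fin r → ℂ)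
    (hdist : Function.Injective (Sum.elim l μ : Fin r ⊕ Fin r → ℂ))
    (ψ : Fin r → ℂ)
    (hzero : ∀ m, 1 + ∑ j, ψ j / (μ m - l j) = 0) :
    ∀ a b : Fin r → ℂ, ∃ ta tb : Fin r → ℂ,
      ∀ ξ : ℂ, (∀ j, ξ ≠ l j) → (∀ m, ξ ≠ μ m) → ∀ h : ℂ,
        (1 + ∑ j, ψ j / (ξ - l j)) ≠ 0 ∧
        (1 / (1 + ∑ j, ψ j / (ξ - l j))) *
            ((∑ j, a j / (ξ - l j)) - h * (1 + ∑ j, b j / (ξ - l j))) =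
          (∑ j, ta j / (ξ - μ j)) - h * (1 + ∑ j, tb j / (ξ - μ j)) := by
  intro a b
  have hμ : Function.Injective μ := hdist.comp Sum.inr_injective
  have hμl : ∀ m j, μ m ≠ l j := fun m j h =>
    Sum.inr_ne_inl (hdist (a₁ := Sum.inr m) (a₂ := Sum.inl j) h)
  obtain ⟨Q, hQ, hQe⟩ := exists_poly_of_poleSum l ψ
  obtain ⟨A, hA, hAe⟩ := exists_poly_of_poleSum l a
  obtain ⟨B, hB, hBe⟩ := exists_poly_of_poleSum l b
  have hN : nodal univ l + Q = nodal univ μ := by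
    refine nodal_add_eq_nodal hμ hQ fun m => ?_
    rw [eval_add, hQe _ (hμl m)]
    linear_combination (nodal univ l).eval (μ m) * hzero m
  obtain ⟨ta, hta⟩ := exists_poleSum_of_poly hμ hA
  -- `N_l + B = N_μ + (B - Q)`, so `B - Q` is the numerator of the strictly proper part.
  obtain ⟨tb, htb⟩ := exists_poleSum_of_poly hμ
    ((degree_sub_le B Q).trans_lt (max_lt hB hQ))
  refine ⟨ta, tb, fun ξ hl hm h => ?_⟩
  have hNl : (nodal univ l).eval ξ ≠ 0 := eval_nodal_not_at_node fun i _ => hl i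
  have hNμ : (nodal univ μ).eval ξ ≠ 0 := eval_nodal_not_at_node fun i _ => hm i
  have hNe := congrArg (eval ξ) hN
  have eQ := hQe ξ hl
  have eA := hAe ξ hl
  have eB := hBe ξ hl
  have eta := hta ξ hm
  have etb := htb ξ hm
  rw [eval_add] at hNe
  rw [eval_sub] at etb
  have hd : (nodal univ l).eval ξ * (1 + ∑ j, ψ j / (ξ - l j)) = (nodal univ μ).eval ξ := by
    linear_combination hNe - eQ
  have hd0 : 1 + ∑ j, ψ j / (ξ - l j) ≠ 0 := fun h0 => hNμ (by rw [← hd, h0, mul_zero])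
  refine ⟨hd0, ?_⟩
  rw [one_div, inv_mul_eq_iff_eq_mul₀ hd0]
  refine mul_left_cancel₀ hNl ?_
  rw [← mul_assoc, hd]
  linear_combination eta - eA + h * (eB - etb - hNe)
end

section
/- Let r ≥ 1, λ ∈ ℂ^r and φ ∈ ℂ^r, and let 𝐞 ∈ ℂ^r be the all-ones vector. Then the characteristic polynomial of the r×r matrix diag(λ_1, …, λ_r) − φ 𝐞ᵀ equals ∏_{j=1}^r (X − λ_j) + Σ_{j=1}^r φ_j ∏_{ℓ≠j} (X − λ_ℓ). Consequently, if the λ_j are pairwise distinct, a point s ∉ {λ_1, …, λ_r} satisfies 1 + Σ_{j=1}^r φ_j/(s − λ_j) = 0 if and only if s is an eigenvalue of diag(λ_1, …, λ_r) − φ 𝐞ᵀ. -/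
open Polynomial Finset Matrix

/-!
The matrix determinant lemma gives `det (diag(d) + φ 𝐞ᵀ) = ∏ d_j * (1 + Σ φ_j / d_j)` over a field
when all `d_j` are nonzero. Taking `d_j = X - l j` in the fraction field of `ℂ[X]` and clearing
denominators yields the characteristic polynomial (`det_diagonal_add_rankOne`). At a point `s` off
the nodes, the same identity reads `charpoly(s) = ∏ (s - l j) * (1 + Σ φ_j / (s - l j))` with
nonzero first factor, so eigenvalues off the nodes are exactly the zeros of the second factor.
-/

/-- Clearing denominators in the barycentric form. -/
lemma prod_mul_one_add_sum_div {n K : Type*} [Fintype n] [DecidableEq n] [Field K]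
    (d φ : n → K) (hd : ∀ j, d j ≠ 0) :
    (∏ j, d j) * (1 + ∑ j, φ j / d j) =
      ∏ j, d j + ∑ j, φ j * ∏ t ∈ Finset.univ.erase j, d t := by
  rw [mul_add, mul_one, Finset.mul_sum]
  congr 1
  refine Finset.sum_congr rfl fun j _ => ?_
  rw [← Finset.mul_prod_erase Finset.univ d (Finset.mem_univ j)]
  field_simp [hd j]

lemma det_diagonal_add_rankOne_field {n K : Type*} [Fintype n] [DecidableEq n] [Field K]
    (d φ : n → K) (hd : ∀ j, d j ≠ 0) :
    (Matrix.diagonal d + Matrix.of fun i _ => φ i).det =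
      ∏ j, d j + ∑ j, φ j * ∏ t ∈ Finset.univ.erase j, d t := by
  have hfac : (Matrix.diagonal d + Matrix.of fun i _ => φ i) =
      Matrix.diagonal d *
        (1 + replicateCol Unit (fun i => φ i / d i) * replicateRow Unit (fun _ : n => (1 : K))) := by
    rw [mul_add, mul_one]
    congr 1
    ext i j
    rw [Matrix.diagonal_mul]
    simp [Matrix.mul_apply, mul_div_cancel₀ _ (hd i)]
  rw [hfac, det_mul, det_diagonal, det_one_add_replicateCol_mul_replicateRow,
    ← prod_mul_one_add_sum_div d φ hd]
  simp [dotProduct]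

/-- The determinant identity over a domain, obtained by embedding it in its fraction field. -/
lemma det_diagonal_add_rankOne {n R : Type*} [Fintype n] [DecidableEq n] [CommRing R] [IsDomain R]
    (d φ : n → R) (hd : ∀ j, d j ≠ 0) :
    (Matrix.diagonal d + Matrix.of fun i _ => φ i).det =
      ∏ j, d j + ∑ j, φ j * ∏ t ∈ Finset.univ.erase j, d t := by
  have hinj := IsFractionRing.injective R (FractionRing R)
  apply hinj
  have h := det_diagonal_add_rankOne_field (fun j => algebraMap R (FractionRing R) (d j))
    (fun j => algebraMap R (FractionRing R) (φ j))
    (fun j => (map_ne_zero_iff _ hinj).2 (hd j))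
  rw [RingHom.map_det]
  simp only [map_add, map_sum, map_mul, map_prod]
  rw [← h]
  congr 1
  ext i j
  by_cases hij : i = j <;> simp [hij]

/-- The characteristic polynomial of `diag(l) - φ 𝐞ᵀ` equals
`∏_j (X - l j) + Σ_j φ j ∏_{ℓ ≠ j} (X - l ℓ)`. Consequently, for pairwise distinct `l j`,
a point `s` outside the nodes is a zero of the barycentric denominator
`1 + Σ_j φ j/(s - l j)` iff `s` is an eigenvalue of `diag(l) - φ 𝐞ᵀ`. -/
theorem vf_relocated_poles_eigenvalues (r : ℕ) (hr : 1 ≤ r) (l φ : Fin r → ℂ) :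
    (Matrix.charpoly (Matrix.diagonal l - Matrix.of fun i _ => φ i) =
      ∏ j, (X - C (l j)) + ∑ j, C (φ j) * ∏ t ∈ Finset.univ.erase j, (X - C (l t))) ∧
    (Function.Injective l → ∀ s : ℂ, (∀ j, s ≠ l j) →
      (1 + ∑ j, φ j / (s - l j) = 0 ↔
        s ∈ spectrum ℂ (Matrix.diagonal l - Matrix.of fun i _ => φ i))) := by
  have hchar : Matrix.charpoly (Matrix.diagonal l - Matrix.of fun i _ => φ i) =
      ∏ j, (X - C (l j)) + ∑ j, C (φ j) * ∏ t ∈ Finset.univ.erase j, (X - C (l t)) := by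
    rw [← det_diagonal_add_rankOne (fun j => X - C (l j)) (fun j => C (φ j))
      (fun j => X_sub_C_ne_zero (l j)), Matrix.charpoly]
    congr 1
    ext1 i j
    by_cases hij : i = j
    · subst hij
      simp
      ring
    · simp [hij]
  refine ⟨hchar, fun _ s hs => ?_⟩
  have hd : ∀ j, s - l j ≠ 0 := fun j => sub_ne_zero.2 (hs j)
  rw [Matrix.mem_spectrum_iff_isRoot_charpoly, hchar, IsRoot.def]
  simp only [eval_add, eval_prod, eval_finsetSum, eval_mul, eval_sub, eval_X, eval_C]
  rw [← prod_mul_one_add_sum_div (fun j => s - l j) φ hd, mul_eq_zero]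
  simp [Finset.prod_ne_zero_iff.2 fun j _ => hd j]
end
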